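/- arXiv:1501.02086 — 2 statements merged into one kernel-verified Lean document; each statement's English description precedes it below -/
import Mathlib

section
/- For every integer p there exists a constant C > 0 such that for all natural numbers N ≥ 2: |∑_{q ∈ ℤ⁴, q₁²+q₂²+q₃²+q₄² ≤ N²} 1/A_p(q)² − (2π²/√5)·log N| ≤ C. (The logarithmic divergence of the one-loop melonic four-point function has coefficient 2π²/√5, where the factor 1/√5 is the square root of the determinant of the quadratic form |q|² + S(q)² on ℝ⁴.) -/
open scoped BigOperators

/-- The gauge-constrained propagator denominator: `A m p q = |q⃗|² + m²` for a momentum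
`q⃗ ∈ ℤ⁶` with one component fixed to `p`, four free components `q`, and the last component
`-(p + S q)` determined by the closure constraint. -/
noncomputable def A (m : ℝ) (p : ℤ) (q : Fin 4 → ℤ) : ℝ :=
  (p : ℝ) ^ 2 + (∑ i, ((q i : ℝ)) ^ 2) + ((p : ℝ) + ∑ i, (q i : ℝ)) ^ 2 + m ^ 2

/-!
Since `A⁻² = ∫₀^∞ t * exp (-t * A) dt`, the sum over momenta is governed by the heat trace
`Θ t = ∑ exp (-t * A)` as `t → 0`. Poisson summation in one integer variable replaces a Gaussian sum
by the corresponding integral up to a relative error `O(t)`, uniformly in its center.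
Completing squares one variable at a time therefore gives `Θ t = κ / t ^ 2 + O(1 / t)`, where
`κ = π ^ 2 / √5`. Truncating the Mellin integral to `t ∈ [1 / N ^ 2, 1]` is a smooth version of the
cutoff `A ≲ N ^ 2`: the change costs only `O(1)` after summation, and it turns the sum into
`∫ t * Θ t dt = κ * log (N ^ 2) + O(1)`.
-/

section

open Real Set MeasureTheory HurwitzZeta

/-! ### Gaussian sums over the integers -/

theorem abs_cosKernel_sub_one_le (b : ℝ) {x : ℝ} (hx : 0 < x) :
    |cosKernel b x - 1| ≤ π / (3 * x) := by
  have hzeta : HasSum (fun n : ℕ => 2 / (π * x) * (1 / ((n : ℝ) + 1) ^ 2)) (π / (3 * x)) := by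
    have h := ((hasSum_nat_add_iff' 1).2 hasSum_zeta_two).mul_left (2 / (π * x))
    convert! h using 1
    · push_cast
      rfl
    · rw [Finset.sum_range_one, Nat.cast_zero]
      field_simp
      ring
  rw [← (hasSum_nat_cosKernel₀ b hx).tsum_eq, ← Real.norm_eq_abs]
  refine tsum_of_norm_bounded hzeta fun n => ?_
  have hexp : exp (-π * (n + 1) ^ 2 * x) ≤ 1 / (π * (n + 1) ^ 2 * x) := by
    rw [show -π * (n + 1) ^ 2 * x = -(π * (n + 1) ^ 2 * x) by ring, exp_neg, ← one_div]
    gcongr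
    linarith [add_one_le_exp (π * (n + 1) ^ 2 * x)]
  calc ‖2 * cos (2 * π * b * (n + 1)) * exp (-π * (n + 1) ^ 2 * x)‖
      = 2 * |cos (2 * π * b * (n + 1))| * exp (-π * (n + 1) ^ 2 * x) := by
        simp
    _ ≤ 2 * 1 * (1 / (π * (n + 1) ^ 2 * x)) := by
        gcongr
        exact abs_cos_le_one _
    _ = 2 / (π * x) * (1 / ((n : ℝ) + 1) ^ 2) := by field_simp

theorem hasSum_exp_neg_mul_int_add_sq {a : ℝ} (ha : 0 < a) (b : ℝ) :
    HasSum (fun n : ℤ => exp (-a * (n + b) ^ 2)) (evenKernel b (a / π)) := by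
  convert! hasSum_int_evenKernel b (t := a / π) (by positivity) using 3 with n
  field_simp

theorem abs_evenKernel_sub_sqrt_le (b : ℝ) {a : ℝ} (ha : 0 < a) :
    |evenKernel b (a / π) - √(π / a)| ≤ √(π * a) / 3 := by
  have hfe : evenKernel b (a / π) = √(π / a) * cosKernel b (π / a) := by
    rw [evenKernel_functional_equation, ← sqrt_eq_rpow, one_div_div, one_div, ← sqrt_inv, inv_div]
  have hsqrt : √(π * a) = √(π / a) * a := by
    rw [← sqrt_sq ha.le, ← sqrt_mul (by positivity), sqrt_sq ha.le]
    congr 1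
    field_simp
  calc |evenKernel b (a / π) - √(π / a)|
      = √(π / a) * |cosKernel b (π / a) - 1| := by
        rw [hfe, ← mul_sub_one, abs_mul, abs_of_nonneg (sqrt_nonneg _)]
    _ ≤ √(π / a) * (π / (3 * (π / a))) := by
        gcongr
        exact abs_cosKernel_sub_one_le b (by positivity)
    _ = √(π * a) / 3 := by
        rw [hsqrt]
        field_simp

/-! ### Heat traces -/

variable {ι : Type*} {a : ι → ℝ}

/-- The heat trace `∑ i, exp (-t * a i)` of a family `a`, thought of as the spectrum of an
operator. It is `0` by convention when the series diverges. -/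
noncomputable def heatTrace (a : ι → ℝ) (t : ℝ) : ℝ :=
  ∑' i, exp (-t * a i)

/-- Small-time asymptotics of a heat trace: it converges on `(0, 1]` and equals
`c * t ^ (-s) + O(t ^ (δ - s))` there. -/
structure HasHeatExpansion (a : ι → ℝ) (c s δ : ℝ) : Prop where
  summable : ∀ t ∈ Ioc (0 : ℝ) 1, Summable fun i => exp (-t * a i)
  exists_bound : ∃ C, ∀ t ∈ Ioc (0 : ℝ) 1,
    |heatTrace a t - c * t ^ (-s)| ≤ C * t ^ (δ - s)

/-- The family `(i, n) ↦ d * (n + b i) ^ 2 + a i`, which adjoins to `a` one integer variable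
entering through a completed square. -/
def adjoinSquare (a : ι → ℝ) (d : ℝ) (b : ι → ℝ) (x : ι × ℤ) : ℝ :=
  d * (x.2 + b x.1) ^ 2 + a x.1

theorem hasSum_exp_adjoinSquare (a : ι → ℝ) {d t : ℝ} (hd : 0 < d) (ht : 0 < t) (b : ι → ℝ)
    (i : ι) : HasSum (fun n => exp (-t * adjoinSquare a d b (i, n)))
      (evenKernel (b i) (t * d / π) * exp (-t * a i)) := by
  convert! (hasSum_exp_neg_mul_int_add_sq (mul_pos ht hd) (b i)).mul_right _ using 2 with n
  rw [← exp_add, adjoinSquare]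
  ring_nf

theorem summable_exp_adjoinSquare {d t : ℝ} (hd : 0 < d) (ht : 0 < t) (b : ι → ℝ)
    (ha : Summable fun i => exp (-t * a i)) :
    Summable fun x => exp (-t * adjoinSquare a d b x) := by
  have hinner := hasSum_exp_adjoinSquare a hd ht b
  refine (summable_prod_of_nonneg fun _ => (exp_pos _).le).2 ⟨fun i => (hinner i).summable, ?_⟩
  simp_rw [(hinner _).tsum_eq]
  refine Summable.of_norm_bounded (ha.mul_left (√(π / (t * d)) + √(π * (t * d)) / 3)) fun i => ?_
  rw [norm_mul, Real.norm_of_nonneg (exp_pos _).le]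
  gcongr
  have hkernel := abs_evenKernel_sub_sqrt_le (b i) (mul_pos ht hd)
  calc ‖evenKernel (b i) (t * d / π)‖
      ≤ |√(π / (t * d))| + |evenKernel (b i) (t * d / π) - √(π / (t * d))| := by
        simpa using abs_add_le (√(π / (t * d))) (evenKernel (b i) (t * d / π) - √(π / (t * d)))
    _ ≤ √(π / (t * d)) + √(π * (t * d)) / 3 := by
        rw [abs_of_nonneg (sqrt_nonneg _)]
        gcongr

theorem abs_heatTrace_adjoinSquare_sub_le {d t : ℝ} (hd : 0 < d) (ht : 0 < t) (b : ι → ℝ)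
    (ha : Summable fun i => exp (-t * a i)) :
    |heatTrace (adjoinSquare a d b) t - √(π / d) * t ^ (-(1 / 2) : ℝ) * heatTrace a t| ≤
      √(π * d) / 3 * t ^ (1 / 2 : ℝ) * heatTrace a t := by
  have hdiv : √(π / d) * t ^ (-(1 / 2) : ℝ) = √(π / (t * d)) := by
    rw [mul_comm t, ← div_div, sqrt_div' _ ht.le, rpow_neg ht.le, ← sqrt_eq_rpow, ← div_eq_mul_inv]
  have hmul : √(π * d) / 3 * t ^ (1 / 2 : ℝ) = √(π * (t * d)) / 3 := by
    rw [mul_left_comm, mul_comm t, sqrt_mul' _ ht.le, ← sqrt_eq_rpow, div_mul_eq_mul_div]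
  have houter : HasSum (fun i => evenKernel (b i) (t * d / π) * exp (-t * a i))
      (heatTrace (adjoinSquare a d b) t) :=
    (summable_exp_adjoinSquare hd ht b ha).hasSum.prod_fiberwise (hasSum_exp_adjoinSquare a hd ht b)
  have ha' : HasSum (fun i => exp (-t * a i)) (heatTrace a t) := ha.hasSum
  rw [hdiv, hmul, ← (houter.sub (ha'.mul_left √(π / (t * d)))).tsum_eq, ← Real.norm_eq_abs]
  refine tsum_of_norm_bounded (ha'.mul_left _) fun i => ?_
  rw [← sub_mul, norm_mul, Real.norm_of_nonneg (exp_pos _).le, Real.norm_eq_abs]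
  gcongr
  exact abs_evenKernel_sub_sqrt_le (b i) (mul_pos ht hd)

namespace HasHeatExpansion

variable {c s δ : ℝ}

theorem exists_heatTrace_le (h : HasHeatExpansion a c s δ) (hδ : 0 ≤ δ) :
    ∃ M, 0 ≤ M ∧ ∀ t ∈ Ioc (0 : ℝ) 1, heatTrace a t ≤ M * t ^ (-s) := by
  obtain ⟨C, hC⟩ := h.exists_bound
  refine ⟨|c| + |C|, by positivity, fun t ht => ?_⟩
  have hpow : t ^ (δ - s) ≤ t ^ (-s) := rpow_le_rpow_of_exponent_ge ht.1 ht.2 (by linarith)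
  have hpos : 0 ≤ t ^ (δ - s) := rpow_nonneg ht.1.le _
  calc heatTrace a t ≤ c * t ^ (-s) + C * t ^ (δ - s) := by linarith [(abs_le.1 (hC t ht)).2]
    _ ≤ |c| * t ^ (-s) + |C| * t ^ (-s) := by
        gcongr
        · exact rpow_nonneg ht.1.le _
        · exact le_abs_self c
        · exact le_abs_self C
    _ = (|c| + |C|) * t ^ (-s) := by ring

theorem comp_equiv {ι' : Type*} (h : HasHeatExpansion a c s δ) (e : ι' ≃ ι) :
    HasHeatExpansion (a ∘ e) c s δ where
  summable t ht := e.summable_iff.2 (h.summable t ht)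
  exists_bound := by
    have heq : heatTrace (a ∘ e) = heatTrace a := funext fun t => e.tsum_eq fun i => exp (-t * a i)
    exact heq ▸ h.exists_bound

theorem of_unique [Unique ι] (ha : 0 ≤ a default) : HasHeatExpansion a 1 0 1 where
  summable _ _ := (hasSum_unique _).summable
  exists_bound := by
    refine ⟨a default, fun t ht => ?_⟩
    have hupper : exp (-t * a default) ≤ 1 := exp_le_one_iff.2 (by nlinarith [ht.1])
    have hlower := add_one_le_exp (-t * a default)
    rw [heatTrace, (hasSum_unique _).tsum_eq, neg_zero, rpow_zero, sub_zero, rpow_one, mul_one,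
      abs_of_nonpos (by linarith)]
    linarith

theorem adjoin_square (h : HasHeatExpansion a c s δ) (hδ₀ : 0 ≤ δ) (hδ₁ : δ ≤ 1) {d : ℝ}
    (hd : 0 < d) (b : ι → ℝ) :
    HasHeatExpansion (adjoinSquare a d b) (c * √(π / d)) (s + 1 / 2) δ where
  summable t ht := summable_exp_adjoinSquare hd ht.1 b (h.summable t ht)
  exists_bound := by
    obtain ⟨C, hC⟩ := h.exists_bound
    obtain ⟨M, hM₀, hM⟩ := h.exists_heatTrace_le hδ₀
    refine ⟨√(π * d) / 3 * M + √(π / d) * C, fun t ht => ?_⟩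
    have ht₀ := ht.1
    have hpow (u : ℝ) : t ^ (-(1 / 2) : ℝ) * t ^ u = t ^ (u - 1 / 2) := by
      rw [← rpow_add ht₀, neg_add_eq_sub]
    have hsquare : |heatTrace (adjoinSquare a d b) t -
        √(π / d) * t ^ (-(1 / 2) : ℝ) * heatTrace a t| ≤
          √(π * d) / 3 * M * t ^ (δ - (s + 1 / 2)) :=
      calc _ ≤ √(π * d) / 3 * t ^ (1 / 2 : ℝ) * heatTrace a t :=
            abs_heatTrace_adjoinSquare_sub_le hd ht₀ b (h.summable t ht)
        _ ≤ √(π * d) / 3 * t ^ (1 / 2 : ℝ) * (M * t ^ (-s)) := by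
            gcongr
            exact hM t ht
        _ = √(π * d) / 3 * M * t ^ (1 / 2 - s) := by
            rw [sub_eq_add_neg, rpow_add ht₀]
            ring
        _ ≤ √(π * d) / 3 * M * t ^ (δ - (s + 1 / 2)) := by
            gcongr ?_ * ?_
            exact rpow_le_rpow_of_exponent_ge ht₀ ht.2 (by linarith)
    have hleading : |√(π / d) * t ^ (-(1 / 2) : ℝ) * heatTrace a t -
        c * √(π / d) * t ^ (-(s + 1 / 2))| ≤ √(π / d) * C * t ^ (δ - (s + 1 / 2)) :=
      calc _ = |√(π / d) * t ^ (-(1 / 2) : ℝ) * (heatTrace a t - c * t ^ (-s))| := by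
            rw [neg_add', ← hpow]
            ring_nf
        _ = √(π / d) * t ^ (-(1 / 2) : ℝ) * |heatTrace a t - c * t ^ (-s)| := by
            rw [abs_mul, abs_of_nonneg (by positivity)]
        _ ≤ √(π / d) * t ^ (-(1 / 2) : ℝ) * (C * t ^ (δ - s)) := by
            gcongr
            exact hC t ht
        _ = √(π / d) * C * t ^ (δ - (s + 1 / 2)) := by
            rw [← sub_sub, ← hpow]
            ring
    rw [add_mul]
    exact (abs_sub_le _ _ _).trans (add_le_add hsquare hleading)

end HasHeatExpansion

theorem hasHeatExpansion_sum_sq_add_mul_sq (k : ℕ) {w c : ℝ} (hw : 0 ≤ w) (hc : 0 ≤ c) (s : ℝ) :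
    HasHeatExpansion (fun q : Fin k → ℤ => ∑ i, (q i : ℝ) ^ 2 + w * (s + ∑ i, (q i : ℝ)) ^ 2 + c)
      (√π ^ k / √(1 + k * w)) (k / 2) 1 := by
  induction k generalizing w with
  | zero =>
    simpa using
      HasHeatExpansion.of_unique (a := fun _ : Fin 0 → ℤ => w * s ^ 2 + c) (by positivity)
  | succ k ih =>
    -- Completing the square in the first variable replaces the weight `w` by `w / (1 + w)`.
    have h := ((ih (w := w / (1 + w)) (by positivity)).adjoin_square zero_le_one le_rfl
      (d := 1 + w) (by positivity)
      fun q => w * (s + ∑ i, (q i : ℝ)) / (1 + w)).comp_equiv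
      ((Fin.consEquiv fun _ => ℤ).symm.trans (Equiv.prodComm _ _))
    have hdet : √(1 + k * (w / (1 + w))) * √(1 + w) = √(1 + (k + 1) * w) := by
      rw [← sqrt_mul (by positivity)]
      congr 1
      field_simp
      ring
    convert! h using 1
    · funext q
      simp only [Fin.sum_univ_succ, Function.comp_apply, Equiv.trans_apply, Fin.consEquiv,
        Equiv.prodComm_apply, Equiv.coe_fn_symm_mk, Prod.swap, adjoinSquare, Fin.tail]
      field_simp
      ring
    · rw [sqrt_div pi_pos.le, div_mul_div_comm, hdet, ← pow_succ, Nat.cast_succ]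
    · push_cast
      ring

/-! ### Truncated Mellin transforms -/

section TruncatedMellin

variable {s x ε c K : ℝ}

/-- The part over `[ε, 1]` of the Mellin integral `∫₀^∞ t ^ (s - 1) * exp (-t * x) dt`, which
represents `Gamma s * x ^ (-s)`. Only `0 ≤ ε ≤ 1` is meaningful. -/
noncomputable def truncatedMellin (s x ε : ℝ) : ℝ :=
  ∫ t in ε..1, t ^ (s - 1) * exp (-t * x)

theorem integrableOn_rpow_mul_exp_neg_mul (hs : 0 < s) (hx : 0 < x) :
    IntegrableOn (fun t : ℝ => t ^ (s - 1) * exp (-t * x)) (Ioi 0) := by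
  simpa [mul_comm x] using
    integrableOn_rpow_mul_exp_neg_mul_rpow (s := s - 1) (by linarith) one_pos hx

theorem integral_rpow_mul_exp_neg_mul (hs : 0 < s) (hx : 0 < x) :
    ∫ t in Ioi 0, t ^ (s - 1) * exp (-t * x) = Gamma s * x ^ (-s) := by
  rw [rpow_neg_eq_inv_rpow, inv_eq_one_div, mul_comm, ← integral_rpow_mul_exp_neg_mul_Ioi hs hx]
  simp_rw [neg_mul, mul_comm x]

theorem integral_Ioi_rpow_mul_exp_neg_mul_le (hs : 0 < s) (hx : 0 < x) (hε : 0 ≤ ε) :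
    ∫ t in Ioi ε, t ^ (s - 1) * exp (-t * x) ≤ Gamma s * (x / 2) ^ (-s) * exp (-(ε / 2) * x) := by
  have hint := integrableOn_rpow_mul_exp_neg_mul hs (half_pos hx)
  have hsub : Ioi ε ⊆ Ioi (0 : ℝ) := Ioi_subset_Ioi hε
  calc ∫ t in Ioi ε, t ^ (s - 1) * exp (-t * x)
      ≤ ∫ t in Ioi ε, t ^ (s - 1) * exp (-t * (x / 2)) * exp (-(ε / 2) * x) := by
        refine setIntegral_mono_on ((integrableOn_rpow_mul_exp_neg_mul hs hx).mono_set hsub)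
          ((hint.mono_set hsub).mul_const _) measurableSet_Ioi fun t ht => ?_
        have ht₀ : 0 ≤ t := hε.trans (le_of_lt ht)
        rw [mul_assoc, ← exp_add]
        gcongr
        nlinarith [mem_Ioi.1 ht]
    _ ≤ (∫ t in Ioi 0, t ^ (s - 1) * exp (-t * (x / 2))) * exp (-(ε / 2) * x) := by
        rw [integral_mul_const]
        gcongr
        filter_upwards [ae_restrict_mem measurableSet_Ioi] with t ht
        have ht₀ : 0 < t := ht
        positivity
    _ = Gamma s * (x / 2) ^ (-s) * exp (-(ε / 2) * x) := by
        rw [integral_rpow_mul_exp_neg_mul hs (half_pos hx)]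

theorem integral_Ioi_rpow_mul_exp_neg_mul_nonneg (s x : ℝ) (hε : 0 ≤ ε) :
    0 ≤ ∫ t in Ioi ε, t ^ (s - 1) * exp (-t * x) := by
  refine setIntegral_nonneg measurableSet_Ioi fun t ht => ?_
  have ht₀ : 0 ≤ t := hε.trans (le_of_lt ht)
  positivity

theorem intervalIntegral_rpow_mul_exp_neg_mul_nonneg (s x : ℝ) (hε : 0 ≤ ε) :
    0 ≤ ∫ t in 0..ε, t ^ (s - 1) * exp (-t * x) := by
  refine intervalIntegral.integral_nonneg hε fun t ht => ?_
  have ht₀ := ht.1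
  positivity

theorem intervalIntegral_rpow_mul_exp_neg_mul_le (hs : 0 < s) (hx : 0 < x) (hε : 0 ≤ ε) :
    ∫ t in 0..ε, t ^ (s - 1) * exp (-t * x) ≤ ε ^ s / s := by
  have hpow : ∫ t in 0..ε, t ^ (s - 1) = ε ^ s / s := by
    rw [integral_rpow (Or.inl (by linarith)), sub_add_cancel, zero_rpow hs.ne', sub_zero]
  rw [← hpow]
  refine intervalIntegral.integral_mono_on hε ?_
    (intervalIntegral.intervalIntegrable_rpow' (by linarith)) fun t ht => ?_
  · exact (intervalIntegrable_iff_integrableOn_Ioc_of_le hε).2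
      ((integrableOn_rpow_mul_exp_neg_mul hs hx).mono_set Ioc_subset_Ioi_self)
  · have ht₀ := ht.1
    exact mul_le_of_le_one_right (by positivity) (exp_le_one_iff.2 (by nlinarith))

theorem truncatedMellin_nonneg (s x : ℝ) (hε₀ : 0 ≤ ε) (hε₁ : ε ≤ 1) :
    0 ≤ truncatedMellin s x ε := by
  refine intervalIntegral.integral_nonneg hε₁ fun t ht => ?_
  have ht₀ := hε₀.trans ht.1
  positivity

theorem truncatedMellin_add_integral_Ioi (hs : 0 < s) (hx : 0 < x) (hε : 0 ≤ ε) :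
    truncatedMellin s x ε + ∫ t in Ioi 1, t ^ (s - 1) * exp (-t * x) =
      ∫ t in Ioi ε, t ^ (s - 1) * exp (-t * x) :=
  have hint := integrableOn_rpow_mul_exp_neg_mul hs hx
  intervalIntegral.integral_interval_add_Ioi (hint.mono_set (Ioi_subset_Ioi hε))
    (hint.mono_set (Ioi_subset_Ioi zero_le_one))

theorem truncatedMellin_le (hs : 0 < s) (hε : 0 < ε) (h : 1 ≤ ε * x) :
    truncatedMellin s x ε ≤ Gamma s * 2 ^ s * (ε ^ s * exp (-(ε / 2) * x)) := by
  have hx : 0 < x := pos_of_mul_pos_right (one_pos.trans_le h) hε.le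
  have hpow : (x / 2) ^ (-s) ≤ 2 ^ s * ε ^ s := by
    rw [rpow_neg_eq_inv_rpow, ← mul_rpow zero_le_two hε.le]
    gcongr
    rw [inv_div, div_le_iff₀ hx]
    linarith
  calc truncatedMellin s x ε ≤ ∫ t in Ioi ε, t ^ (s - 1) * exp (-t * x) := by
        rw [← truncatedMellin_add_integral_Ioi hs hx hε.le]
        linarith [integral_Ioi_rpow_mul_exp_neg_mul_nonneg s x zero_le_one]
    _ ≤ Gamma s * (x / 2) ^ (-s) * exp (-(ε / 2) * x) :=
        integral_Ioi_rpow_mul_exp_neg_mul_le hs hx hε.le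
    _ ≤ Gamma s * (2 ^ s * ε ^ s) * exp (-(ε / 2) * x) := by gcongr
    _ = Gamma s * 2 ^ s * (ε ^ s * exp (-(ε / 2) * x)) := by ring

theorem abs_Gamma_mul_rpow_sub_truncatedMellin_le (hs : 0 < s) (hc : 0 < c) (hcx : c ≤ x)
    (hε : 0 ≤ ε) (h : ε * x ≤ K) :
    |Gamma s * x ^ (-s) - truncatedMellin s x ε| ≤
      exp (K / 2) / s * (ε ^ s * exp (-(ε / 2) * x)) +
        Gamma s * (c / 2) ^ (-s) * exp (-(1 / 2) * x) := by
  have hx : 0 < x := hc.trans_le hcx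
  have hint := integrableOn_rpow_mul_exp_neg_mul hs hx
  have hsplit : Gamma s * x ^ (-s) - truncatedMellin s x ε =
      (∫ t in 0..ε, t ^ (s - 1) * exp (-t * x)) + ∫ t in Ioi 1, t ^ (s - 1) * exp (-t * x) := by
    rw [← integral_rpow_mul_exp_neg_mul hs hx,
      ← intervalIntegral.integral_interval_add_Ioi hint (hint.mono_set (Ioi_subset_Ioi hε)),
      ← truncatedMellin_add_integral_Ioi hs hx hε]
    ring
  have hhead : ε ^ s / s ≤ exp (K / 2) / s * (ε ^ s * exp (-(ε / 2) * x)) := by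
    have hexp : 1 ≤ exp (K / 2) * exp (-(ε / 2) * x) := by
      rw [← exp_add]
      exact one_le_exp (by linarith)
    calc ε ^ s / s ≤ ε ^ s / s * (exp (K / 2) * exp (-(ε / 2) * x)) :=
          le_mul_of_one_le_right (by positivity) hexp
      _ = exp (K / 2) / s * (ε ^ s * exp (-(ε / 2) * x)) := by ring
  have htail : Gamma s * (x / 2) ^ (-s) ≤ Gamma s * (c / 2) ^ (-s) := by
    gcongr ?_ * ?_
    exact rpow_le_rpow_of_nonpos (by positivity) (by linarith) (by linarith)
  rw [hsplit, abs_of_nonneg (add_nonneg (intervalIntegral_rpow_mul_exp_neg_mul_nonneg s x hε)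
    (integral_Ioi_rpow_mul_exp_neg_mul_nonneg s x zero_le_one))]
  exact add_le_add ((intervalIntegral_rpow_mul_exp_neg_mul_le hs hx hε).trans hhead)
    ((integral_Ioi_rpow_mul_exp_neg_mul_le hs hx zero_le_one).trans (by gcongr))

theorem abs_indicator_sub_truncatedMellin_le {F : Set ι} {i : ι} (hs : 0 < s) (hc : 0 < c)
    (hci : c ≤ a i) (hε₀ : 0 < ε) (hε₁ : ε ≤ 1) (hF : i ∈ F → ε * a i ≤ K)
    (hF' : i ∉ F → 1 ≤ ε * a i) :
    |F.indicator (fun i => Gamma s * a i ^ (-s)) i - truncatedMellin s (a i) ε| ≤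
      (exp (K / 2) / s + Gamma s * 2 ^ s) * (ε ^ s * exp (-(ε / 2) * a i)) +
        Gamma s * (c / 2) ^ (-s) * exp (-(1 / 2) * a i) := by
  rw [add_mul]
  by_cases hi : i ∈ F
  · rw [indicator_of_mem hi]
    refine (abs_Gamma_mul_rpow_sub_truncatedMellin_le hs hc hci hε₀.le (hF hi)).trans ?_
    gcongr
    exact le_add_of_nonneg_right (by positivity)
  · rw [indicator_of_notMem hi, zero_sub, abs_neg,
      abs_of_nonneg (truncatedMellin_nonneg s (a i) hε₀.le hε₁), add_right_comm]
    exact (truncatedMellin_le hs hε₀ (hF' hi)).trans (le_add_of_nonneg_left (by positivity))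

end TruncatedMellin

/-! ### From heat traces to logarithmic divergences -/

theorem norm_exp_neg_mul_le {x ε t : ℝ} (hx : 0 ≤ x) (ht : ε ≤ t) :
    ‖exp (-t * x)‖ ≤ exp (-ε * x) := by
  rw [Real.norm_of_nonneg (exp_pos _).le]
  gcongr

theorem continuousOn_heatTrace (ha : ∀ i, 0 ≤ a i) {ε : ℝ}
    (hsum : Summable fun i => exp (-ε * a i)) : ContinuousOn (heatTrace a) (Ici ε) :=
  continuousOn_tsum (fun i => by fun_prop) hsum fun i _ ht => norm_exp_neg_mul_le (ha i) ht

theorem intervalIntegrable_rpow_mul_heatTrace (ha : ∀ i, 0 ≤ a i) {ε : ℝ} (hε : 0 < ε) (s : ℝ)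
    (hsum : Summable fun i => exp (-ε * a i)) (hε₁ : ε ≤ 1) :
    IntervalIntegrable (fun t => t ^ (s - 1) * heatTrace a t) volume ε 1 := by
  refine ContinuousOn.intervalIntegrable_of_Icc hε₁ (ContinuousOn.mul ?_ ?_)
  · exact continuousOn_id.rpow_const fun t ht => Or.inl (hε.trans_le ht.1).ne'
  · exact (continuousOn_heatTrace ha hsum).mono Icc_subset_Ici_self

theorem hasSum_truncatedMellin (ha : ∀ i, 0 ≤ a i) {ε : ℝ} (hε : 0 < ε) (hε₁ : ε ≤ 1) (s : ℝ)
    (hsum : Summable fun i => exp (-ε * a i)) :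
    HasSum (fun i => truncatedMellin s (a i) ε) (∫ t in ε..1, t ^ (s - 1) * heatTrace a t) := by
  have hcount : Countable ι := by
    have hsupp : Function.support (fun i => exp (-ε * a i)) = univ :=
      Function.support_eq_univ fun i => (exp_pos _).ne'
    exact countable_univ_iff.1 (hsupp ▸ hsum.countable_support)
  have hmem {t : ℝ} (ht : t ∈ uIoc ε 1) : ε ≤ t := (uIoc_of_le hε₁ ▸ ht).1.le
  refine intervalIntegral.hasSum_integral_of_dominated_convergence
    (fun i t => t ^ (s - 1) * exp (-ε * a i)) (fun i => ?_) (fun i => ?_) ?_ ?_ ?_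
  · exact Measurable.aestronglyMeasurable (by fun_prop)
  · refine .of_forall fun t ht => ?_
    have ht₀ : 0 ≤ t := hε.le.trans (hmem ht)
    rw [norm_mul, Real.norm_of_nonneg (by positivity)]
    gcongr
    exact norm_exp_neg_mul_le (ha i) (hmem ht)
  · exact .of_forall fun t _ => hsum.mul_left _
  · simp_rw [tsum_mul_left]
    refine ((ContinuousOn.rpow_const continuousOn_id fun t ht => Or.inl ?_).mul
      continuousOn_const).intervalIntegrable_of_Icc hε₁
    exact (hε.trans_le ht.1).ne'
  · refine .of_forall fun t ht => ?_
    exact (hsum.of_norm_bounded fun i => norm_exp_neg_mul_le (ha i) (hmem ht)).hasSum.mul_left _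

namespace HasHeatExpansion

variable {κ s δ c : ℝ}

theorem exists_abs_rpow_mul_heatTrace_sub_le (h : HasHeatExpansion a κ s δ) :
    ∃ C, ∀ t ∈ Ioc (0 : ℝ) 1,
      |t ^ (s - 1) * heatTrace a t - κ * t⁻¹| ≤ C * t ^ (δ - 1) := by
  obtain ⟨C, hC⟩ := h.exists_bound
  refine ⟨C, fun t ht => ?_⟩
  have ht₀ := ht.1
  have hpow (u : ℝ) : t ^ (s - 1) * t ^ (u - s) = t ^ (u - 1) := by
    rw [← rpow_add ht₀]
    ring_nf
  have hinv : t ^ (s - 1) * t ^ (-s) = t⁻¹ := by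
    simpa [rpow_neg_one] using hpow 0
  calc |t ^ (s - 1) * heatTrace a t - κ * t⁻¹|
      = |t ^ (s - 1) * (heatTrace a t - κ * t ^ (-s))| := by
        rw [← hinv]
        ring_nf
    _ = t ^ (s - 1) * |heatTrace a t - κ * t ^ (-s)| := by
        rw [abs_mul, abs_of_nonneg (by positivity)]
    _ ≤ t ^ (s - 1) * (C * t ^ (δ - s)) := by
        gcongr
        exact hC t ht
    _ = C * t ^ (δ - 1) := by rw [← hpow δ, mul_left_comm]

theorem exists_abs_integral_sub_log_le (h : HasHeatExpansion a κ s δ) (hδ : 0 < δ)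
    (ha : ∀ i, 0 ≤ a i) : ∃ B, ∀ ε ∈ Ioc (0 : ℝ) 1,
      |(∫ t in ε..1, t ^ (s - 1) * heatTrace a t) - κ * log ε⁻¹| ≤ B := by
  obtain ⟨C, hC⟩ := h.exists_abs_rpow_mul_heatTrace_sub_le
  have hC₀ : 0 ≤ C := by simpa using (abs_nonneg _).trans (hC 1 ⟨one_pos, le_rfl⟩)
  refine ⟨C / δ, fun ε ⟨hε, hε₁⟩ => ?_⟩
  have hlog : κ * log ε⁻¹ = ∫ t in ε..1, κ * t⁻¹ := by
    rw [intervalIntegral.integral_const_mul, integral_inv_of_pos hε one_pos, one_div]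
  have hmain : IntervalIntegrable (fun t : ℝ => κ * t⁻¹) volume ε 1 :=
    ContinuousOn.intervalIntegrable_of_Icc hε₁ <| continuousOn_const.mul <|
      continuousOn_id.inv₀ fun t ht => (hε.trans_le ht.1).ne'
  have herror : IntervalIntegrable (fun t : ℝ => C * t ^ (δ - 1)) volume ε 1 :=
    (intervalIntegral.intervalIntegrable_rpow' (by linarith)).const_mul C
  rw [hlog, ← intervalIntegral.integral_sub
    (intervalIntegrable_rpow_mul_heatTrace ha hε s (h.summable ε ⟨hε, hε₁⟩) hε₁) hmain,
    ← Real.norm_eq_abs]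
  calc ‖∫ t in ε..1, (t ^ (s - 1) * heatTrace a t - κ * t⁻¹)‖
      ≤ ∫ t in ε..1, C * t ^ (δ - 1) :=
        intervalIntegral.norm_integral_le_of_norm_le hε₁
          (.of_forall fun t ht => hC t ⟨hε.trans ht.1, ht.2⟩) herror
    _ = C / δ * (1 - ε ^ δ) := by
        rw [intervalIntegral.integral_const_mul, integral_rpow (Or.inl (by linarith)),
          sub_add_cancel, one_rpow]
        ring
    _ ≤ C / δ := mul_le_of_le_one_right (by positivity) (by linarith [rpow_nonneg hε.le δ])

theorem exists_abs_tsum_sub_integral_le (h : HasHeatExpansion a κ s δ) (hs : 0 < s) (hδ : 0 ≤ δ)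
    (hc : 0 < c) (hca : ∀ i, c ≤ a i) (K : ℝ) :
    ∃ B, ∀ ε ∈ Ioc (0 : ℝ) 1, ∀ F : Set ι, (∀ i ∈ F, ε * a i ≤ K) → (∀ i ∉ F, 1 ≤ ε * a i) →
      |Gamma s * ∑' i : F, a i ^ (-s) - ∫ t in ε..1, t ^ (s - 1) * heatTrace a t| ≤ B := by
  obtain ⟨M, -, hM⟩ := h.exists_heatTrace_le hδ
  set B₁ := exp (K / 2) / s + Gamma s * 2 ^ s
  set B₂ := Gamma s * (c / 2) ^ (-s)
  refine ⟨B₁ * (M * 2 ^ s) + B₂ * (M * 2 ^ s), fun ε ⟨hε, hε₁⟩ F hF hF' => ?_⟩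
  have hε_half : ε / 2 ∈ Ioc (0 : ℝ) 1 := ⟨by positivity, by linarith⟩
  have hone_half : (1 / 2 : ℝ) ∈ Ioc (0 : ℝ) 1 := by norm_num
  have hmellin := hasSum_truncatedMellin (fun i => hc.le.trans (hca i)) hε hε₁ s
    (h.summable ε ⟨hε, hε₁⟩)
  have hterm (i : ι) :
      ‖F.indicator (fun i => Gamma s * a i ^ (-s)) i - truncatedMellin s (a i) ε‖ ≤
        B₁ * (ε ^ s * exp (-(ε / 2) * a i)) + B₂ * exp (-(1 / 2) * a i) :=
    abs_indicator_sub_truncatedMellin_le hs hc (hca i) hε hε₁ (hF i) (hF' i)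
  have hbound : HasSum
      (fun i => B₁ * (ε ^ s * exp (-(ε / 2) * a i)) + B₂ * exp (-(1 / 2) * a i))
      (B₁ * (ε ^ s * heatTrace a (ε / 2)) + B₂ * heatTrace a (1 / 2)) :=
    (((h.summable _ hε_half).hasSum.mul_left _).mul_left _).add
      ((h.summable _ hone_half).hasSum.mul_left _)
  have hind : Summable (F.indicator fun i => Gamma s * a i ^ (-s)) :=
    ((hbound.summable.of_norm_bounded hterm).add hmellin.summable).congr fun i =>
      sub_add_cancel _ _
  rw [← tsum_mul_left, tsum_subtype F fun i => Gamma s * a i ^ (-s), ← hmellin.tsum_eq,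
    ← hind.tsum_sub hmellin.summable, ← Real.norm_eq_abs]
  refine (tsum_of_norm_bounded hbound hterm).trans ?_
  gcongr ?_ * ?_ + ?_ * ?_
  · calc ε ^ s * heatTrace a (ε / 2) ≤ ε ^ s * (M * (ε / 2) ^ (-s)) := by
          gcongr
          exact hM _ hε_half
      _ = M * 2 ^ s := by
          rw [rpow_neg_eq_inv_rpow, inv_div, div_rpow zero_le_two hε.le]
          field_simp
  · simpa [rpow_neg_eq_inv_rpow] using hM _ hone_half

theorem exists_abs_tsum_rpow_sub_log_le (h : HasHeatExpansion a κ s δ) (hs : 0 < s) (hδ : 0 < δ)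
    (hc : 0 < c) (hca : ∀ i, c ≤ a i) (K : ℝ) :
    ∃ B, ∀ Λ, 1 ≤ Λ → ∀ F : Set ι, (∀ i ∈ F, a i ≤ K * Λ) → (∀ i ∉ F, Λ ≤ a i) →
      |∑' i : F, a i ^ (-s) - κ / Gamma s * log Λ| ≤ B := by
  obtain ⟨B₁, hB₁⟩ := h.exists_abs_tsum_sub_integral_le hs hδ.le hc hca K
  obtain ⟨B₂, hB₂⟩ := h.exists_abs_integral_sub_log_le hδ fun i => hc.le.trans (hca i)
  refine ⟨(B₁ + B₂) / Gamma s, fun Λ hΛ F hF hF' => ?_⟩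
  have hΛ₀ : 0 < Λ := one_pos.trans_le hΛ
  have hΓ : 0 < Gamma s := Gamma_pos_of_pos hs
  have hε : Λ⁻¹ ∈ Ioc (0 : ℝ) 1 := ⟨inv_pos.2 hΛ₀, inv_le_one_of_one_le₀ hΛ⟩
  have hsum := hB₁ Λ⁻¹ hε F (fun i hi => (inv_mul_le_iff₀ hΛ₀).2 (mul_comm K Λ ▸ hF i hi))
    fun i hi => (le_inv_mul_iff₀ hΛ₀).2 ((mul_one Λ).symm ▸ hF' i hi)
  have hlog := hB₂ Λ⁻¹ hε
  rw [inv_inv] at hlog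
  rw [le_div_iff₀ hΓ, mul_comm, ← abs_of_pos hΓ, ← abs_mul, abs_of_pos hΓ, mul_sub, ← mul_assoc,
    mul_div_cancel₀ _ hΓ.ne']
  exact (abs_sub_le _ _ _).trans (add_le_add hsum hlog)

end HasHeatExpansion

/-! ### The gauge-constrained propagator -/

section Propagator

variable (m : ℝ) (p : ℤ) (q : Fin 4 → ℤ)

theorem sq_le_A : m ^ 2 ≤ A m p q :=
  le_add_of_nonneg_left (by positivity)

theorem sum_sq_le_A : ∑ i, (q i : ℝ) ^ 2 ≤ A m p q := by
  rw [A]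
  linarith [sq_nonneg (p : ℝ), sq_nonneg ((p : ℝ) + ∑ i, (q i : ℝ)), sq_nonneg m]

theorem A_le_of_sum_sq_le {Λ : ℝ} (hΛ : 1 ≤ Λ) (hq : ∑ i, (q i : ℝ) ^ 2 ≤ Λ) :
    A m p q ≤ (3 * p ^ 2 + m ^ 2 + 9) * Λ := by
  have hsum : (∑ i, (q i : ℝ)) ^ 2 ≤ 4 * ∑ i, (q i : ℝ) ^ 2 := by
    simpa using sq_sum_le_card_mul_sum_sq (s := Finset.univ) (f := fun i => (q i : ℝ))
  have hgauge := add_sq_le (a := (p : ℝ)) (b := ∑ i, (q i : ℝ))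
  have hconst : 3 * (p : ℝ) ^ 2 + m ^ 2 ≤ (3 * p ^ 2 + m ^ 2) * Λ :=
    le_mul_of_one_le_right (by positivity) hΛ
  rw [A]
  linarith

theorem hasHeatExpansion_A : HasHeatExpansion (A m p) (π ^ 2 / √5) 2 1 := by
  have hπ : √π ^ 4 = π ^ 2 := by rw [pow_mul √π 2 2, sq_sqrt pi_pos.le]
  convert! hasHeatExpansion_sum_sq_add_mul_sq 4 zero_le_one
    (by positivity : 0 ≤ (p : ℝ) ^ 2 + m ^ 2) (p : ℝ) using 1
  · funext q
    rw [A]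
    ring
  · rw [hπ]
    norm_num
  · norm_num

end Propagator

end

/-- The logarithmic divergence of the one-loop melonic four-point function has
coefficient `2π²/√5`. -/
theorem four_point_log_divergence (m : ℝ) (hm : 0 < m) (p : ℤ) :
    ∃ C : ℝ, 0 < C ∧ ∀ N : ℕ, 2 ≤ N →
      |(∑' q : {q : Fin 4 → ℤ // (∑ i, (q i) ^ 2) ≤ (N : ℤ) ^ 2}, 1 / (A m p q.1) ^ 2) -
        (2 * Real.pi ^ 2 / Real.sqrt 5) * Real.log N| ≤ C := by
  obtain ⟨B, hB⟩ := (hasHeatExpansion_A m p).exists_abs_tsum_rpow_sub_log_le two_pos one_pos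
    (pow_pos hm 2) (sq_le_A m p) (3 * p ^ 2 + m ^ 2 + 9)
  refine ⟨max B 1, by positivity, fun N hN => le_max_of_le_left ?_⟩
  have hN_sq : (1 : ℝ) ≤ (N : ℝ) ^ 2 := by
    exact_mod_cast Nat.one_le_pow 2 N (by omega)
  convert! hB ((N : ℝ) ^ 2) hN_sq {q | ∑ i, q i ^ 2 ≤ (N : ℤ) ^ 2} (fun q hq => ?_)
    (fun q hq => ?_) using 3
  · refine tsum_congr fun q => ?_
    rw [Real.rpow_neg ((sq_nonneg m).trans (sq_le_A m p q.1)), Real.rpow_two, one_div]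
  · rw [Real.Gamma_two, Real.log_pow]
    push_cast
    ring
  · exact A_le_of_sum_sq_le m p q hN_sq (by exact_mod_cast hq)
  · exact le_trans (by exact_mod_cast (not_le.1 hq).le) (sum_sq_le_A m p q)
end

section
/- For every integer p there exists a constant C > 0 such that for all real Λ ≥ 2: |∫_{1/Λ²}^{∞} α·e^{−αm²}·(∑_{q ∈ ℤ⁴} e^{−α(p² + q₁²+q₂²+q₃²+q₄² + (p+S(q))²)}) dα − (2π²/√5)·log Λ| ≤ C. (This is the asymptotic expansion, in the Schwinger-parametric cutoff Λ, of the one-loop melonic four-point bubble of the model: it diverges logarithmically with coefficient 2π²/√5.) -/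
open MeasureTheory
open scoped BigOperators

/-!
By the completed square `α k² + α (x + k)² / (n + 1) = α x² / (n + 2) + c (k + x / (n + 2))²` with
`c = α (n + 2) / (n + 1)`, summing out one lattice variable of the constrained theta series maps the
Gaussian main term in `n` variables to the one in `n + 1` variables times a cosine theta kernel.
Poisson summation shows this kernel to be `1 + O(α)`, uniformly in `x`, so by induction on `n` the
theta series is `(π / α) ^ (n / 2) / √(n + 1) * exp (-α x² / (n + 1)) * (1 + O(α))`. Against
`α ^ (n / 2 - 1)` this leaves a pole `A / α`, `A = π ^ (n / 2) / √(n + 1)`, with a bounded remainder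
near `0`, and the cutoff at `1 / Λ²` turns the pole into `2 A log Λ`; the factor
`exp (-α (m² + p²))` makes the integral converge at infinity.
-/

section

open Real Set HurwitzZeta

theorem summable_pi_prod {n : ℕ} {β : Fin n → Type*} {f : ∀ i, β i → ℝ}
    (hf : ∀ i, Summable (f i)) (hf₀ : ∀ i b, 0 ≤ f i b) :
    Summable fun q : ∀ i, β i => ∏ i, f i (q i) := by
  induction n with
  | zero => exact Summable.of_finite
  | succ n ih =>
    rw [← (Fin.consEquiv β).summable_iff]
    have tail : Summable fun q : ∀ i : Fin n, β i.succ => ∏ i, f i.succ (q i) :=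
      ih (fun i => hf i.succ) fun i => hf₀ i.succ
    refine ((hf 0).mul_of_nonneg tail (hf₀ 0)
      fun q => Finset.prod_nonneg fun i _ => hf₀ i.succ _).congr fun q => ?_
    simp only [Function.comp, Fin.consEquiv_apply, Fin.prod_univ_succ, Fin.cons_zero, Fin.cons_succ]

theorem norm_setIntegral_Ioi_add_log_smul_le {E : Type*} [NormedAddCommGroup E] [NormedSpace ℝ E]
    [CompleteSpace E] {f : ℝ → E} {A : E} {D ε : ℝ}
    (hmeas : AEStronglyMeasurable f (volume.restrict (Ioc 0 1))) (hf : IntegrableOn f (Ioi 1))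
    (hD : ∀ α ∈ Ioc (0 : ℝ) 1, ‖f α - α⁻¹ • A‖ ≤ D) (hε : ε ∈ Ioc (0 : ℝ) 1) :
    ‖(∫ α in Ioi ε, f α) + log ε • A‖ ≤ D + ‖∫ α in Ioi 1, f α‖ := by
  have hsub : Ioc ε 1 ⊆ Ioc 0 1 := Ioc_subset_Ioc_left hε.1.le
  have bound : ∀ α ∈ Ioc ε 1, ‖f α - α⁻¹ • A‖ ≤ D := fun α hα => hD α (hsub hα)
  have zero_notMem : (0 : ℝ) ∉ uIcc ε 1 := by
    rw [uIcc_of_le hε.2]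
    exact fun h => hε.1.not_ge h.1
  have inv_int : IntervalIntegrable (fun α : ℝ => α⁻¹) volume ε 1 :=
    intervalIntegrable_inv_iff.mpr (.inr zero_notMem)
  have pole_int : IntervalIntegrable (fun α : ℝ => α⁻¹ • A) volume ε 1 :=
    ⟨inv_int.1.smul_const A, inv_int.2.smul_const A⟩
  have rest_int : IntervalIntegrable (fun α => f α - α⁻¹ • A) volume ε 1 := by
    rw [intervalIntegrable_iff_integrableOn_Ioc_of_le hε.2] at pole_int ⊢
    exact IntegrableOn.of_bound measure_Ioc_lt_top
      ((hmeas.mono_set hsub).sub pole_int.aestronglyMeasurable) D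
      ((ae_restrict_iff' measurableSet_Ioc).mpr (.of_forall bound))
  have f_int : IntervalIntegrable f volume ε 1 := by
    simpa only [sub_add_cancel] using rest_int.add pole_int
  have pole_eq : ∫ α in ε..1, α⁻¹ • A = -(log ε • A) := by
    rw [intervalIntegral.integral_smul_const, integral_inv_of_pos hε.1 one_pos, one_div, log_inv,
      neg_smul]
  have rest_le : ‖∫ α in ε..1, (f α - α⁻¹ • A)‖ ≤ D := by
    have hD₀ : 0 ≤ D := (norm_nonneg _).trans (hD 1 (right_mem_Ioc.mpr one_pos))
    calc ‖∫ α in ε..1, (f α - α⁻¹ • A)‖ ≤ D * |1 - ε| :=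
          intervalIntegral.norm_integral_le_of_norm_le_const (by rwa [uIoc_of_le hε.2])
      _ ≤ D * 1 := by
          gcongr
          rw [abs_of_nonneg (sub_nonneg.mpr hε.2)]
          linarith [hε.1]
      _ = D := mul_one D
  calc ‖(∫ α in Ioi ε, f α) + log ε • A‖
      = ‖(∫ α in ε..1, (f α - α⁻¹ • A)) + ∫ α in Ioi 1, f α‖ := by
        rw [← intervalIntegral.integral_interval_add_Ioi' f_int hf,
          intervalIntegral.integral_sub f_int pole_int, pole_eq]
        congr 1
        abel
    _ ≤ D + ‖∫ α in Ioi 1, f α‖ := (norm_add_le _ _).trans (by gcongr)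

theorem abs_cosKernel_sub_one_le_s9 (a : UnitAddCircle) {t : ℝ} (ht : 0 < t) :
    |cosKernel a t - 1| ≤ (∑' n : ℤ, 1 / (n : ℝ) ^ 2) / (π * t) := by
  induction a using QuotientAddGroup.induction_on with | H a =>
  have majorant : HasSum (fun n : ℤ => 1 / (n : ℝ) ^ 2 / (π * t))
      ((∑' n : ℤ, 1 / (n : ℝ) ^ 2) / (π * t)) :=
    (summable_one_div_int_pow.mpr one_lt_two).hasSum.div_const _
  rw [← norm_eq_abs, ← Complex.norm_real, Complex.ofReal_sub, Complex.ofReal_one]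
  refine (hasSum_int_cosKernel₀ a ht).norm_le_of_bounded majorant fun n => ?_
  split_ifs with hn
  · simp [hn]
  have hn₀ : (n : ℝ) ≠ 0 := mod_cast hn
  have phase : ‖Complex.exp (2 * π * Complex.I * a * n)‖ = 1 := by
    rw [show 2 * π * Complex.I * a * n = ((2 * π * a * n : ℝ) : ℂ) * Complex.I by push_cast; ring,
      Complex.norm_exp_ofReal_mul_I]
  rw [norm_mul, phase, one_mul, Complex.norm_real, norm_of_nonneg (exp_pos _).le]
  calc exp (-π * (n : ℝ) ^ 2 * t) = (exp (π * (n : ℝ) ^ 2 * t))⁻¹ := by rw [← exp_neg]; ring_nf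
    _ ≤ (π * (n : ℝ) ^ 2 * t)⁻¹ :=
        inv_anti₀ (by positivity) (by linarith [add_one_le_exp (π * (n : ℝ) ^ 2 * t)])
    _ = 1 / (n : ℝ) ^ 2 / (π * t) := by field_simp

theorem hasSum_int_exp_neg_mul_add_sq {c : ℝ} (hc : 0 < c) (b : ℝ) :
    HasSum (fun k : ℤ => exp (-c * (k + b) ^ 2)) (√(π / c) * cosKernel b (π / c)) := by
  have h := hasSum_int_evenKernel b (div_pos hc pi_pos)
  rw [evenKernel_functional_equation, ← sqrt_eq_rpow, one_div, ← sqrt_inv, inv_div, one_div,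
    inv_div] at h
  refine h.congr_fun fun k => ?_
  congr 1
  field_simp

/-- The theta series `∑ exp (-α |k|²)` over the vectors `k = (q, -(x + ∑ qᵢ))` with `q ∈ ℤⁿ`: the
closure constraint, that the coordinates of `k` and `x` sum to zero, eliminates the last
coordinate. -/
noncomputable def closureTheta (n : ℕ) (α x : ℝ) : ℝ :=
  ∑' q : Fin n → ℤ, exp (-α * (∑ i, (q i : ℝ) ^ 2 + (x + ∑ i, (q i : ℝ)) ^ 2))

/-- The value, for `0 < α`, of the integral over `q ∈ ℝⁿ` of the function summed over `ℤⁿ` in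
`closureTheta n α x`; it is the leading term of the theta series as `α → 0`. -/
noncomputable def closureGaussian (n : ℕ) (α x : ℝ) : ℝ :=
  (π / α) ^ ((n : ℝ) / 2) / √(n + 1) * exp (-α * x ^ 2 / (n + 1))

/-- The integrand over the Schwinger parameter `α` of the bubble with `n` free momenta and external
momentum `x`, where `μ` collects the squared mass and the square of the external momentum. The power
of `α` is the one at which the integral diverges logarithmically at `0`; it is `α` itself for
`n = 4`. -/
noncomputable def bubbleIntegrand (n : ℕ) (μ x α : ℝ) : ℝ :=
  α ^ ((n : ℝ) / 2 - 1) * exp (-α * μ) * closureTheta n α x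

section Theta

variable {α : ℝ}

theorem summable_closureTheta (hα : 0 < α) (n : ℕ) (x : ℝ) :
    Summable fun q : Fin n → ℤ => exp (-α * (∑ i, (q i : ℝ) ^ 2 + (x + ∑ i, (q i : ℝ)) ^ 2)) := by
  have gauss : Summable fun k : ℤ => exp (-α * (k : ℝ) ^ 2) := by
    simpa only [add_zero] using (hasSum_int_exp_neg_mul_add_sq hα 0).summable
  refine (summable_pi_prod (fun _ : Fin n => gauss) fun _ _ => (exp_pos _).le).of_nonneg_of_le
    (fun q => (exp_pos _).le) fun q => ?_
  rw [← exp_sum, ← Finset.mul_sum, exp_le_exp]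
  nlinarith [mul_nonneg hα.le (sq_nonneg (x + ∑ i, (q i : ℝ)))]

theorem closureTheta_nonneg (n : ℕ) (α x : ℝ) : 0 ≤ closureTheta n α x :=
  tsum_nonneg fun _ => (exp_pos _).le

theorem closureTheta_antitoneOn (n : ℕ) (x : ℝ) :
    AntitoneOn (fun α => closureTheta n α x) (Ioi 0) := fun α hα β hβ hαβ =>
  (summable_closureTheta hβ n x).tsum_le_tsum (fun q => by gcongr) (summable_closureTheta hα n x)

theorem measurable_closureTheta (n : ℕ) (x : ℝ) : Measurable fun α => closureTheta n α x :=
  Measurable.tsum fun q => by fun_prop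

theorem hasSum_closureTheta_succ (hα : 0 < α) (n : ℕ) (x : ℝ) :
    HasSum (fun k : ℤ => exp (-α * (k : ℝ) ^ 2) * closureTheta n α (x + k))
      (closureTheta (n + 1) α x) := by
  have joint := (Fin.consEquiv fun _ : Fin (n + 1) => ℤ).hasSum_iff.mpr
    (summable_closureTheta hα (n + 1) x).hasSum
  refine joint.prod_fiberwise fun k => ?_
  refine ((summable_closureTheta hα n (x + k)).hasSum.mul_left _).congr_fun fun q => ?_
  simp only [Function.comp, Fin.consEquiv_apply, Fin.sum_univ_succ, Fin.cons_zero, Fin.cons_succ]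
  rw [← exp_add]
  ring_nf

theorem exp_mul_closureGaussian (hα : 0 < α) (n : ℕ) (x k : ℝ) :
    exp (-α * k ^ 2) * closureGaussian n α (x + k) =
      closureGaussian (n + 1) α x / √(π / (α * (n + 2) / (n + 1))) *
        exp (-(α * (n + 2) / (n + 1)) * (k + x / (n + 2)) ^ 2) := by
  have normalization : (π / α) ^ ((n : ℝ) / 2) / √(n + 1) =
      (π / α) ^ (((n + 1 : ℕ) : ℝ) / 2) / √((n + 1 : ℕ) + 1) /
        √(π / (α * (n + 2) / (n + 1))) := by
    have hsqrt : √(π / (α * (n + 2) / (n + 1))) = √(π / α) * √(n + 1) / √((n + 1 : ℕ) + 1) := by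
      rw [← sqrt_mul (by positivity), ← sqrt_div (by positivity)]
      congr 1
      push_cast
      field_simp
      ring
    rw [hsqrt, show ((n + 1 : ℕ) : ℝ) / 2 = n / 2 + 1 / 2 by push_cast; ring,
      rpow_add (by positivity), ← sqrt_eq_rpow]
    field_simp
  have square : exp (-α * k ^ 2) * exp (-α * (x + k) ^ 2 / (n + 1)) =
      exp (-α * x ^ 2 / ((n + 1 : ℕ) + 1)) *
        exp (-(α * (n + 2) / (n + 1)) * (k + x / (n + 2)) ^ 2) := by
    rw [← exp_add, ← exp_add]
    congr 1
    push_cast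
    field_simp
    ring
  rw [closureGaussian, closureGaussian, mul_left_comm, square, normalization]
  ring

theorem hasSum_exp_mul_closureGaussian (hα : 0 < α) (n : ℕ) (x : ℝ) :
    HasSum (fun k : ℤ => exp (-α * (k : ℝ) ^ 2) * closureGaussian n α (x + k))
      (closureGaussian (n + 1) α x *
        cosKernel (x / (n + 2) : ℝ) (π / (α * (n + 2) / (n + 1)))) := by
  have hc : 0 < α * (n + 2) / (n + 1) := by positivity
  have h := (hasSum_int_exp_neg_mul_add_sq hc (x / (n + 2))).mul_left
    (closureGaussian (n + 1) α x / √(π / (α * (n + 2) / (n + 1))))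
  rw [← mul_assoc, div_mul_cancel₀ _ (sqrt_pos.mpr (div_pos pi_pos hc)).ne'] at h
  exact h.congr_fun fun k => exp_mul_closureGaussian hα n x k

theorem closureGaussian_nonneg (hα : 0 < α) (n : ℕ) (x : ℝ) : 0 ≤ closureGaussian n α x := by
  unfold closureGaussian
  positivity

theorem abs_closureTheta_succ_sub_le {n : ℕ} {x δ : ℝ} (hα : 0 < α)
    (h : ∀ y, |closureTheta n α y - closureGaussian n α y| ≤ δ * closureGaussian n α y) :
    |closureTheta (n + 1) α x - closureGaussian (n + 1) α x *
        cosKernel (x / (n + 2) : ℝ) (π / (α * (n + 2) / (n + 1)))| ≤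
      δ * (closureGaussian (n + 1) α x *
        cosKernel (x / (n + 2) : ℝ) (π / (α * (n + 2) / (n + 1)))) := by
  have gauss := hasSum_exp_mul_closureGaussian hα n x
  refine ((hasSum_closureTheta_succ hα n x).sub gauss).norm_le_of_bounded (gauss.mul_left δ)
    fun k => ?_
  rw [← mul_sub, norm_mul, norm_of_nonneg (exp_pos _).le, norm_eq_abs, mul_left_comm]
  gcongr
  exact h _

theorem exists_abs_closureTheta_sub_le (n : ℕ) :
    ∃ C, 0 ≤ C ∧ ∀ α ∈ Ioc (0 : ℝ) 1, ∀ x,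
      |closureTheta n α x - closureGaussian n α x| ≤ C * α * closureGaussian n α x := by
  induction n with
  | zero => exact ⟨0, le_rfl, fun α _ x => by simp [closureTheta, closureGaussian]⟩
  | succ n ih =>
    obtain ⟨C, hC, ih⟩ := ih
    set K : ℝ := 2 * (∑' n : ℤ, 1 / (n : ℝ) ^ 2) / π ^ 2
    have hK : 0 ≤ K := by positivity
    refine ⟨C * (1 + K) + K, by positivity, fun α hα x => ?_⟩
    have hα₀ : 0 < α := hα.1
    set G := closureGaussian (n + 1) α x
    have hG : 0 ≤ G := closureGaussian_nonneg hα₀ (n + 1) x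
    set κ := cosKernel (x / (n + 2) : ℝ) (π / (α * (n + 2) / (n + 1)))
    have hκ : |κ - 1| ≤ K * α := by
      have width_le : α * (n + 2) / (n + 1) ≤ 2 * α := by
        rw [div_le_iff₀ (by positivity)]
        nlinarith [mul_nonneg hα₀.le n.cast_nonneg]
      calc |κ - 1| ≤ (∑' n : ℤ, 1 / (n : ℝ) ^ 2) / (π * (π / (α * (n + 2) / (n + 1)))) :=
            abs_cosKernel_sub_one_le_s9 _ (by positivity)
        _ = (∑' n : ℤ, 1 / (n : ℝ) ^ 2) / π ^ 2 * (α * (n + 2) / (n + 1)) := by field_simp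
        _ ≤ (∑' n : ℤ, 1 / (n : ℝ) ^ 2) / π ^ 2 * (2 * α) := by gcongr
        _ = K * α := by ring
    have hκ' : κ ≤ 1 + K := by
      nlinarith [(abs_le.mp hκ).2, hα.2]
    calc |closureTheta (n + 1) α x - G|
        ≤ |closureTheta (n + 1) α x - G * κ| + |G * κ - G| := abs_sub_le _ _ _
      _ ≤ C * α * (G * κ) + G * |κ - 1| := by
          gcongr
          · exact abs_closureTheta_succ_sub_le hα₀ (ih α hα)
          · rw [← mul_sub_one, abs_mul, abs_of_nonneg hG]
      _ ≤ C * α * (G * (1 + K)) + G * (K * α) := by gcongr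
      _ = (C * (1 + K) + K) * α * G := by ring

end Theta

section Bubble

variable {n : ℕ} {μ x α : ℝ}

theorem rpow_mul_closureGaussian (hα : 0 < α) :
    α ^ ((n : ℝ) / 2 - 1) * closureGaussian n α x =
      α⁻¹ * (π ^ ((n : ℝ) / 2) / √(n + 1)) * exp (-α * x ^ 2 / (n + 1)) := by
  rw [closureGaussian, div_rpow pi_pos.le hα.le, rpow_sub_one hα.ne']
  field_simp

theorem exists_abs_bubbleIntegrand_sub_le (n : ℕ) (hμ : 0 ≤ μ) (x : ℝ) :
    ∃ D, ∀ α ∈ Ioc (0 : ℝ) 1,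
      |bubbleIntegrand n μ x α - α⁻¹ * (π ^ ((n : ℝ) / 2) / √(n + 1))| ≤ D := by
  obtain ⟨C, hC, theta⟩ := exists_abs_closureTheta_sub_le n
  set A := π ^ ((n : ℝ) / 2) / √(n + 1)
  have : 0 ≤ A := by positivity
  set B := μ + x ^ 2 / (n + 1) with hB
  refine ⟨C * A + A * B, fun α hα => ?_⟩
  have hα₀ : 0 < α := hα.1
  have pole : α ^ ((n : ℝ) / 2 - 1) * closureGaussian n α x =
      α⁻¹ * A * exp (-α * x ^ 2 / (n + 1)) := rpow_mul_closureGaussian hα₀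
  have mass_le : exp (-α * μ) ≤ 1 := exp_le_one_iff.mpr (by nlinarith)
  have momentum_le : exp (-α * x ^ 2 / (n + 1)) ≤ 1 :=
    exp_le_one_iff.mpr (div_nonpos_of_nonpos_of_nonneg (by nlinarith [sq_nonneg x]) (by positivity))
  have combine : exp (-α * μ) * exp (-α * x ^ 2 / (n + 1)) = exp (-(α * B)) := by
    rw [← exp_add, hB]
    ring_nf
  have exp_near_one : |exp (-(α * B)) - 1| ≤ α * B := by
    have : exp (-(α * B)) ≤ 1 := exp_le_one_iff.mpr (by rw [neg_nonpos]; positivity)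
    rw [abs_sub_comm, abs_of_nonneg (by linarith)]
    linarith [one_sub_le_exp_neg (α * B)]
  have split : bubbleIntegrand n μ x α - α⁻¹ * A =
      α ^ ((n : ℝ) / 2 - 1) * exp (-α * μ) * (closureTheta n α x - closureGaussian n α x) +
        α⁻¹ * A * (exp (-(α * B)) - 1) := by
    rw [bubbleIntegrand, ← combine]
    linear_combination exp (-α * μ) * pole
  rw [split]
  refine (abs_add_le _ _).trans (add_le_add ?_ ?_)
  · rw [abs_mul, abs_of_nonneg (by positivity)]
    calc α ^ ((n : ℝ) / 2 - 1) * exp (-α * μ) * |closureTheta n α x - closureGaussian n α x|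
        ≤ α ^ ((n : ℝ) / 2 - 1) * 1 * (C * α * closureGaussian n α x) := by
          gcongr
          exact theta α hα x
      _ = C * A * exp (-α * x ^ 2 / (n + 1)) := by
          rw [mul_one, mul_left_comm, pole]
          field_simp
      _ ≤ C * A := mul_le_of_le_one_right (by positivity) momentum_le
  · rw [abs_mul, abs_of_nonneg (by positivity)]
    calc α⁻¹ * A * |exp (-(α * B)) - 1| ≤ α⁻¹ * A * (α * B) := by gcongr
      _ = A * B := by field_simp

theorem measurable_bubbleIntegrand (n : ℕ) (μ x : ℝ) : Measurable (bubbleIntegrand n μ x) := by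
  have := measurable_closureTheta n x
  unfold bubbleIntegrand
  fun_prop

theorem integrableOn_bubbleIntegrand (n : ℕ) (hμ : 0 < μ) (x : ℝ) :
    IntegrableOn (bubbleIntegrand n μ x) (Ioi 1) := by
  have majorant : IntegrableOn
      (fun α : ℝ => α ^ ((n : ℝ) / 2) * exp (-μ * α) * closureTheta n 1 x) (Ioi 1) := by
    have hn : -1 < (n : ℝ) / 2 := by linarith [show 0 ≤ (n : ℝ) / 2 by positivity]
    have h := integrableOn_rpow_mul_exp_neg_mul_rpow hn one_pos hμ
    simp only [rpow_one] at h
    exact (h.mono_set (Ioi_subset_Ioi zero_le_one)).mul_const _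
  refine majorant.mono' (measurable_bubbleIntegrand n μ x).aestronglyMeasurable
    ((ae_restrict_iff' measurableSet_Ioi).mpr (.of_forall fun α (hα : 1 < α) => ?_))
  have hα₀ : 0 < α := one_pos.trans hα
  have theta_nonneg := closureTheta_nonneg n α x
  rw [norm_of_nonneg (by unfold bubbleIntegrand; positivity), bubbleIntegrand,
    show -α * μ = -μ * α by ring]
  gcongr
  · exact hα.le
  · linarith
  · exact closureTheta_antitoneOn n x (mem_Ioi.mpr one_pos) hα₀ hα.le

theorem bubbleIntegrand_mass_add_sq (n : ℕ) (m p α : ℝ) :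
    bubbleIntegrand n (m ^ 2 + p ^ 2) p α =
      α ^ ((n : ℝ) / 2 - 1) * exp (-α * m ^ 2) *
        ∑' q : Fin n → ℤ,
          exp (-α * (p ^ 2 + ∑ i, (q i : ℝ) ^ 2 + (p + ∑ i, (q i : ℝ)) ^ 2)) := by
  rw [bubbleIntegrand, mul_add, exp_add, ← mul_assoc, mul_assoc _ (exp (-α * p ^ 2)), closureTheta,
    ← tsum_mul_left]
  simp only [← exp_add, ← mul_add, ← add_assoc]

end Bubble

theorem one_loop_four_point_asymptotics_general (n : ℕ) (m p : ℝ) (hmp : 0 < m ^ 2 + p ^ 2) :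
    ∃ C : ℝ, 0 < C ∧ ∀ Λ : ℝ, 1 ≤ Λ →
      |(∫ α in Ioi (1 / Λ ^ 2),
          α ^ ((n : ℝ) / 2 - 1) * exp (-α * m ^ 2) *
            (∑' q : Fin n → ℤ,
              exp (-α * (p ^ 2 + (∑ i, (q i : ℝ) ^ 2) + (p + ∑ i, (q i : ℝ)) ^ 2))))
        - (2 * π ^ ((n : ℝ) / 2) / √(n + 1)) * log Λ| ≤ C := by
  obtain ⟨D, hD⟩ := exists_abs_bubbleIntegrand_sub_le n hmp.le p
  refine ⟨max 1 (D + ‖∫ α in Ioi 1, bubbleIntegrand n (m ^ 2 + p ^ 2) p α‖),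
    lt_max_of_lt_left one_pos, fun Λ hΛ => le_max_of_le_right ?_⟩
  have hε : 1 / Λ ^ 2 ∈ Ioc (0 : ℝ) 1 :=
    ⟨by positivity, div_le_one_of_le₀ (one_le_pow₀ hΛ) (by positivity)⟩
  have log_eq : log (1 / Λ ^ 2) = -(2 * log Λ) := by simp
  have key := norm_setIntegral_Ioi_add_log_smul_le
    (measurable_bubbleIntegrand n (m ^ 2 + p ^ 2) p).aestronglyMeasurable
    (integrableOn_bubbleIntegrand n hmp p) hD hε
  simp only [← bubbleIntegrand_mass_add_sq]
  calc _ = ‖(∫ α in Ioi (1 / Λ ^ 2), bubbleIntegrand n (m ^ 2 + p ^ 2) p α) +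
        log (1 / Λ ^ 2) • (π ^ ((n : ℝ) / 2) / √(n + 1))‖ := by
        rw [norm_eq_abs, log_eq, smul_eq_mul]
        ring_nf
    _ ≤ _ := key

end

/-- Asymptotic expansion, in the Schwinger-parametric cutoff `Λ`, of the one-loop melonic
four-point bubble of the rank-6 quartic U(1) TGFT with closure constraint: it diverges
logarithmically with coefficient `2π²/√5`. -/
theorem one_loop_four_point_asymptotics (m : ℝ) (hm : 0 < m) (p : ℤ) :
    ∃ C : ℝ, 0 < C ∧ ∀ Λ : ℝ, 2 ≤ Λ →
      |(∫ α in Set.Ioi (1 / Λ ^ 2),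
          α * Real.exp (-α * m ^ 2) *
            (∑' q : Fin 4 → ℤ,
              Real.exp (-α * ((p : ℝ) ^ 2 + (∑ i, (q i : ℝ) ^ 2)
                + ((p : ℝ) + ∑ i, (q i : ℝ)) ^ 2))))
        - (2 * Real.pi ^ 2 / Real.sqrt 5) * Real.log Λ| ≤ C := by
  obtain ⟨C, hC, h⟩ := one_loop_four_point_asymptotics_general 4 m p (by positivity)
  exact ⟨C, hC, fun Λ hΛ => by convert h Λ (by linarith) using 5 <;> norm_num⟩
end
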